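/- arXiv:math/0502048 — 4 statements merged into one kernel-verified Lean document; each statement's English description precedes it below -/
import Mathlib

section
/- Let (X, U) be a Hausdorff uniform space whose uniformity is generated by a family {d_i : i ∈ I} of pseudometrics, and let T : X → X be an orbitally continuous map such that X is T-orbitally complete. Suppose there exist real numbers b_i, c_i with 0 < b_i + c_i < 1 such that for all i ∈ I and all x, y ∈ X: min{d_i(Tx, Ty), d_i(x, Tx), d_i(y, Ty)} − min{d_i(x, Ty), d_i(y, Tx)} ≤ b_i · d_i(x, Tx) + c_i · d_i(x, y). Then for each x ∈ X, the sequence of iterates {T^n x} converges to a fixed point of T. -/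
open Filter

theorem orbit_step_summable {X : Type*} (d : X → X → ℝ)
    (hd_self : ∀ x, d x x = 0)
    (hd_nonneg : ∀ x y, 0 ≤ d x y)
    (hd_symm : ∀ x y, d x y = d y x)
    (hd_tri : ∀ x y z, d x z ≤ d x y + d y z)
    (T : X → X) (b c : ℝ) (h1 : b + c < 1)
    (h : ∀ (x y : X),
      min (d (T x) (T y)) (min (d x (T x)) (d y (T y)))
      - min (d x (T y)) (d y (T x))
      ≤ b * d x (T x) + c * d x y) (u : ℕ → X) (hu : ∀ n, u (n+1) = T (u n)) :
    Summable (fun n => d (u n) (u (n+1))) := by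
  by_cases hz : ∀ n, d (u n) (u (n+1)) = 0
  · simp only [hz]; exact summable_zero
  push Not at hz
  classical
  have hs0 : ∀ n, 0 ≤ d (u n) (u (n+1)) := fun n => hd_nonneg _ _
  obtain ⟨n0, hn0, hmin⟩ : ∃ n0, d (u n0) (u (n0+1)) ≠ 0 ∧
      ∀ m < n0, d (u m) (u (m+1)) = 0 :=
    ⟨Nat.find hz, Nat.find_spec hz, fun m hm => by simpa using Nat.find_min hz hm⟩
  have key : ∀ j N, 0 < d (u j) (u (j+1)) → d (u (j+1)) (u N) = 0 →
      d (u N) (u (N+1)) ≤ (b + c) * d (u j) (u (j+1)) := by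
    intro j N hj hN
    have hh := h (u j) (u N)
    rw [← hu, ← hu] at hh
    have e1 : d (u N) (u (j+1)) = 0 := by rw [hd_symm]; exact hN
    have e2 : d (u j) (u N) = d (u j) (u (j+1)) := by
      have := hd_tri (u j) (u (j+1)) (u N)
      have := hd_tri (u j) (u N) (u (j+1))
      linarith
    have e3 : d (u (j+1)) (u (N+1)) = d (u N) (u (N+1)) := by
      have := hd_tri (u (j+1)) (u N) (u (N+1))
      have := hd_tri (u N) (u (j+1)) (u (N+1))
      linarith
    rw [e1, e2, e3, min_eq_right (hd_nonneg (u j) (u (N+1)))] at hh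
    rcases le_total (d (u j) (u (j+1))) (d (u N) (u (N+1))) with hl | hl
    · rw [min_eq_left hl, min_eq_right hl] at hh
      nlinarith
    · rw [min_eq_right hl, min_self] at hh
      linarith
  have inv : ∀ p, ∃ j, 0 < d (u j) (u (j+1)) ∧ d (u (j+1)) (u (n0+1+p)) = 0 ∧
      (1 - (b+c)) * (∑ m ∈ Finset.range (n0+1+p), d (u m) (u (m+1)))
        + (b+c) * d (u j) (u (j+1)) ≤ d (u n0) (u (n0+1)) := by
    intro p
    induction p with
    | zero =>
      refine ⟨n0, lt_of_le_of_ne (hs0 _) (Ne.symm hn0), hd_self _, ?_⟩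
      rw [add_zero, Finset.sum_range_succ,
        Finset.sum_eq_zero (fun m hm => hmin m (Finset.mem_range.1 hm))]
      linarith
    | succ p ih =>
      obtain ⟨j, hj, hjN, hS⟩ := ih
      have hk := key j _ hj hjN
      rw [← add_assoc, Finset.sum_range_succ]
      rcases (hs0 (n0+1+p)).eq_or_lt with h0 | h0
      · refine ⟨j, hj, ?_, ?_⟩
        · have := hd_tri (u (j+1)) (u (n0+1+p)) (u (n0+1+p+1))
          have := hd_nonneg (u (j+1)) (u (n0+1+p+1))
          linarith
        · rw [← h0, add_zero]; exact hS
      · refine ⟨n0+1+p, h0, hd_self _, ?_⟩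
        linarith
  have hb : ∃ C, ∀ p, ∑ m ∈ Finset.range (n0+1+p), d (u m) (u (m+1)) ≤ C := by
    by_cases hc : 0 ≤ b + c
    · refine ⟨d (u n0) (u (n0+1)) / (1 - (b+c)), fun p => ?_⟩
      obtain ⟨j, hj, -, hS⟩ := inv p
      rw [le_div_iff₀ (by linarith)]
      nlinarith [mul_nonneg hc hj.le]
    · exfalso
      have := key n0 (n0+1) (lt_of_le_of_ne (hs0 _) (Ne.symm hn0)) (hd_self _)
      nlinarith [hs0 (n0+1), hs0 n0, lt_of_le_of_ne (hs0 _) (Ne.symm hn0)]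
  obtain ⟨C, hC⟩ := hb
  refine summable_of_sum_range_le hs0 (c := C) fun n => le_trans ?_ (hC n)
  exact Finset.sum_le_sum_of_subset_of_nonneg
    (Finset.range_mono (by omega)) (fun m _ _ => hs0 m)

theorem dist_le_partial {X : Type*} (d : X → X → ℝ)
    (hd_self : ∀ x, d x x = 0)
    (hd_tri : ∀ x y z, d x z ≤ d x y + d y z) (u : ℕ → X) (n p : ℕ) :
    d (u n) (u (n+p)) ≤ ∑ m ∈ Finset.range (n+p), d (u m) (u (m+1))
      - ∑ m ∈ Finset.range n, d (u m) (u (m+1)) := by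
  induction p with
  | zero => simp [hd_self]
  | succ p ih =>
    rw [← add_assoc, Finset.sum_range_succ]
    linarith [hd_tri (u n) (u (n+p)) (u (n+p+1))]

/-- Let `(X, U)` be a Hausdorff uniform space whose uniformity is generated
by a family `{d_i : i ∈ I}` of pseudometrics, and `T : X → X` an orbitally continuous map
such that `X` is `T`-orbitally complete. If there are reals `b_i, c_i` with
`0 < b_i + c_i < 1` such that for all `i` and all `x, y`:
`min{d_i(Tx,Ty), d_i(x,Tx), d_i(y,Ty)} − min{d_i(x,Ty), d_i(y,Tx)}`
`≤ b_i·d_i(x,Tx) + c_i·d_i(x,y)`, then for each `x` the sequence of iterates `{T^n x}`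
converges to a fixed point of `T`. -/
theorem stmt_3 {X I : Type*} [UniformSpace X] [T2Space X]
    (d : I → X → X → ℝ)
    (hd_self : ∀ i x, d i x x = 0)
    (hd_nonneg : ∀ i x y, 0 ≤ d i x y)
    (hd_symm : ∀ i x y, d i x y = d i y x)
    (hd_tri : ∀ i x y z, d i x z ≤ d i x y + d i y z)
    -- the uniformity of `X` is generated by the pseudometrics `d i`:
    (hU : uniformity X = ⨅ (i : I) (ε : ℝ) (_ : 0 < ε),
      Filter.principal {p : X × X | d i p.1 p.2 < ε})
    (T : X → X)
    -- `T` is orbitally continuous: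
    (hTcont : ∀ (x u : X) (n : ℕ → ℕ), StrictMono n →
      Tendsto (fun j => T^[n j] x) atTop (nhds u) →
      Tendsto (fun j => T (T^[n j] x)) atTop (nhds (T u)))
    -- `X` is `T`-orbitally complete:
    (horb : ∀ x : X, ∀ l : Filter X, Cauchy l →
      l ≤ Filter.map (fun n : ℕ => T^[n] x) Filter.atTop → ∃ z, l ≤ nhds z)
    (b c : I → ℝ)
    (hbc0 : ∀ i, 0 < b i + c i) (hbc1 : ∀ i, b i + c i < 1)
    (h : ∀ (i : I) (x y : X),
      min (d i (T x) (T y)) (min (d i x (T x)) (d i y (T y)))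
      - min (d i x (T y)) (d i y (T x))
      ≤ b i * d i x (T x) + c i * d i x y) :
    ∀ x : X, ∃ z : X, T z = z ∧ Tendsto (fun n : ℕ => T^[n] x) atTop (nhds z) := by
  intro x
  have hu : ∀ n, T^[n+1] x = T (T^[n] x) := fun n => Function.iterate_succ_apply' T n x
  have hC : CauchySeq (fun n : ℕ => T^[n] x) := by
    rw [cauchySeq_iff_tendsto, hU]
    simp only [tendsto_iInf, tendsto_principal]
    intro i ε hε
    have hs := (orbit_step_summable (d i) (hd_self i) (hd_nonneg i) (hd_symm i) (hd_tri i) T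
      (b i) (c i) (hbc1 i) (h i) (fun n => T^[n] x) hu).hasSum.tendsto_sum_nat.cauchySeq
    obtain ⟨N, hN⟩ := Metric.cauchySeq_iff.1 hs ε hε
    have aux : ∀ n p, N ≤ n → d i (T^[n] x) (T^[n+p] x) < ε := fun n p hn => by
      have h1 := dist_le_partial (d i) (hd_self i) (hd_tri i) (fun n => T^[n] x) n p
      have h2 := hN (n+p) (by omega) n hn
      rw [Real.dist_eq] at h2
      exact lt_of_le_of_lt h1 (lt_of_le_of_lt (le_abs_self _) h2)
    filter_upwards [eventually_ge_atTop (N, N)] with q hq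
    obtain ⟨n, m⟩ := q
    obtain ⟨hn, hm⟩ := hq
    simp only at hn hm
    show d i (T^[n] x) (T^[m] x) < ε
    rcases le_total n m with hnm | hnm
    · obtain ⟨p, rfl⟩ := Nat.exists_eq_add_of_le hnm
      exact aux n p hn
    · obtain ⟨p, rfl⟩ := Nat.exists_eq_add_of_le hnm
      rw [hd_symm]
      exact aux m p hm
  obtain ⟨z, hz⟩ := horb x _ hC le_rfl
  have hz' : Tendsto (fun n : ℕ => T^[n] x) atTop (nhds z) := hz
  refine ⟨z, ?_, hz'⟩
  have h1 := hTcont x z id strictMono_id hz'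
  have h2 := hz'.comp (tendsto_add_atTop_nat 1)
  refine tendsto_nhds_unique h1 (h2.congr fun n => ?_)
  exact hu n
end

section
/- Let (X, d) be a complete metric space and let T : X → X be a continuous map. Suppose there exist real numbers b, c with 0 < b + c < 1 such that for all x, y ∈ X: min{d(Tx, Ty), d(x, Tx), d(y, Ty)} − min{d(x, Ty), d(y, Tx)} ≤ b · d(x, Tx) + c · d(x, y). Then for each x ∈ X, the sequence of iterates {T^n x} converges to a fixed point of T. -/
open Filter

/-- Let `(X, d)` be a complete metric space and `T : X → X` continuous,
satisfying `min{d(Tx,Ty), d(x,Tx), d(y,Ty)} − min{d(x,Ty), d(y,Tx)} ≤ b·d(x,Tx) + c·d(x,y)`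
with `0 < b + c < 1`. Then for each `x`, the sequence of iterates `T^[n] x` converges to a
fixed point of `T`. -/
theorem stmt_7 {X : Type*} [MetricSpace X] [CompleteSpace X]
    (T : X → X) (hT : Continuous T)
    (b c : ℝ) (hbc0 : 0 < b + c) (hbc1 : b + c < 1)
    (h : ∀ x y : X,
      min (dist (T x) (T y)) (min (dist x (T x)) (dist y (T y)))
      - min (dist x (T y)) (dist y (T x))
      ≤ b * dist x (T x) + c * dist x y) :
    ∀ x : X, ∃ z : X, T z = z ∧ Tendsto (fun n : ℕ => T^[n] x) atTop (nhds z) := by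
  intro x
  have step : ∀ u : X, dist (T u) (T (T u)) ≤ (b + c) * dist u (T u) := by
    intro u
    rcases eq_or_ne u (T u) with e | e
    · rw [← e, ← e]; simp
    · have hp : 0 < dist u (T u) := dist_pos.mpr e
      have h1 := h u (T u)
      rw [dist_self, min_eq_right (dist_nonneg : 0 ≤ dist u (T (T u)))] at h1
      have h2 : (b + c) * dist u (T u) < dist u (T u) := by nlinarith
      by_contra hc
      push Not at hc
      have h3 : (b + c) * dist u (T u) < min (dist (T u) (T (T u)))
          (min (dist u (T u)) (dist (T u) (T (T u)))) :=
        lt_min hc (lt_min h2 hc)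
      linarith
  have bound : ∀ n : ℕ, dist (T^[n] x) (T^[n + 1] x) ≤ dist x (T x) * (b + c) ^ n := by
    intro n
    induction n with
    | zero => simp
    | succ n ih =>
      have h1 := step (T^[n] x)
      rw [← Function.iterate_succ_apply' T, ← Function.iterate_succ_apply' T] at h1
      refine h1.trans ?_
      calc (b + c) * dist (T^[n] x) (T^[n + 1] x)
          ≤ (b + c) * (dist x (T x) * (b + c) ^ n) := by gcongr
        _ = dist x (T x) * (b + c) ^ (n + 1) := by ring
  obtain ⟨z, hz⟩ := cauchySeq_tendsto_of_complete
    (cauchySeq_of_le_geometric (b + c) (dist x (T x)) hbc1 bound)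
  exact ⟨z, isFixedPt_of_tendsto_iterate hz hT.continuousAt, hz⟩
end

section
/- Let (X, d) be a metric space, let F : X → 2^X be a multifunction with Fx nonempty and compact for each x ∈ X, let r ≥ 1 be an integer and a, b, c real numbers with 0 < b + c < 1, and suppose that for all x, y ∈ X: min{H(Fx, Fy)^r, d(x, Fx)·d(y, Fy)^{r-1}, d(y, Fy)^r} + a · min{d(x, Fy), d(y, Fx)} ≤ [b · d(x, Fx) + c · d(x, y)] · d(y, Fy)^{r-1}. Let {x_n} be a sequence with x_{n+1} ∈ F x_n and d(x_n, x_{n+1}) = d(x_n, F x_n) for all n, and assume d(x_n, F x_n) > 0 for all n. Then d(x_n, x_{n+1}) ≤ (b + c) · d(x_{n-1}, x_n) for all n ≥ 1, and consequently d(x_n, x_{n+1}) ≤ (b + c)^n · d(x_0, x_1) for all n ≥ 0. -/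
open Metric

/-- In a metric space, if `F` is a multifunction with nonempty compact
values satisfying the contractive inequality with exponent `r ≥ 1` and `0 < b + c < 1`,
and `{x_n}` is an orbit with `x_{n+1} ∈ F x_n`, `d(x_n, x_{n+1}) = d(x_n, F x_n) > 0`,
then `d(x_n, x_{n+1}) ≤ (b+c)·d(x_{n-1}, x_n)` for `n ≥ 1`, and consequently
`d(x_n, x_{n+1}) ≤ (b+c)^n · d(x_0, x_1)` for all `n`. -/
theorem stmt_9 {X : Type*} [MetricSpace X]
    (F : X → Set X) (hne : ∀ x, (F x).Nonempty) (hcomp : ∀ x, IsCompact (F x))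
    (r : ℕ) (hr : 1 ≤ r) (a b c : ℝ) (hbc0 : 0 < b + c) (hbc1 : b + c < 1)
    (h : ∀ x y : X,
      min (hausdorffDist (F x) (F y) ^ r)
        (min (infDist x (F x) * infDist y (F y) ^ (r - 1)) (infDist y (F y) ^ r))
      + a * min (infDist x (F y)) (infDist y (F x))
      ≤ (b * infDist x (F x) + c * dist x y) * infDist y (F y) ^ (r - 1))
    (x : ℕ → X) (hx : ∀ n, x (n + 1) ∈ F (x n))
    (hdx : ∀ n, dist (x n) (x (n + 1)) = infDist (x n) (F (x n)))
    (hpos : ∀ n, 0 < infDist (x n) (F (x n))) :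
    (∀ n : ℕ, dist (x (n + 1)) (x (n + 2)) ≤ (b + c) * dist (x n) (x (n + 1))) ∧
    (∀ n : ℕ, dist (x n) (x (n + 1)) ≤ (b + c) ^ n * dist (x 0) (x 1)) := by
  have key : ∀ n : ℕ, dist (x (n + 1)) (x (n + 2)) ≤ (b + c) * dist (x n) (x (n + 1)) := by
    intro n
    have h1 := h (x n) (x (n + 1))
    have hz : infDist (x (n + 1)) (F (x n)) = 0 := infDist_zero_of_mem (hx n)
    have hm : min (infDist (x n) (F (x (n + 1)))) (infDist (x (n + 1)) (F (x n))) = 0 := by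
      rw [hz]; exact min_eq_right infDist_nonneg
    have hH : infDist (x (n + 1)) (F (x (n + 1)))
        ≤ hausdorffDist (F (x n)) (F (x (n + 1))) :=
      infDist_le_hausdorffDist_of_mem (hx n)
        (hausdorffEDist_ne_top_of_nonempty_of_bounded (hne _) (hne _)
          (hcomp _).isBounded (hcomp _).isBounded)
    have hp := hpos n
    have hq := hpos (n + 1)
    rw [hm, hdx n] at h1
    rw [hdx n, hdx (n + 1)]
    set p := infDist (x n) (F (x n))
    set q := infDist (x (n + 1)) (F (x (n + 1)))
    have hHr := pow_le_pow_left₀ hq.le hH r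
    rw [min_eq_right (le_trans (min_le_right _ _) hHr)] at h1
    obtain ⟨k, rfl⟩ : ∃ k, r = k + 1 := ⟨r - 1, by omega⟩
    simp only [Nat.add_sub_cancel] at h1
    have hk : 0 < q ^ k := pow_pos hq k
    rw [pow_succ', ← min_mul_of_nonneg _ _ hk.le] at h1
    have h2 : min p q ≤ (b + c) * p := by
      refine le_of_mul_le_mul_right ?_ hk
      linarith
    rcases min_le_iff.1 h2 with h3 | h3
    · nlinarith
    · exact h3
  refine ⟨key, fun n => ?_⟩
  induction n with
  | zero => simp
  | succ n ih =>
    calc _ ≤ (b + c) * dist (x n) (x (n + 1)) := key n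
      _ ≤ (b + c) * ((b + c) ^ n * dist (x 0) (x 1)) := mul_le_mul_of_nonneg_left ih hbc0.le
      _ = _ := by ring
end

section
/- Let (X, d) be a metric space, let F : X → 2^X be a multifunction with Fx nonempty and compact for each x ∈ X, let r ≥ 1 be an integer and a, b, c real numbers with 0 < b + c < 1, and suppose that for all x, y ∈ X: min{H(Fx, Fy)^r, d(x, Fx)·d(y, Fy)^{r-1}, d(y, Fy)^r} + a · min{d(x, Fy), d(y, Fx)} ≤ [b · d(x, Fx) + c · d(x, y)] · d(y, Fy)^{r-1}. Let {x_n} be a sequence with x_{n+1} ∈ F x_n and d(x_n, x_{n+1}) = d(x_n, F x_n) for all n, and assume d(x_n, F x_n) > 0 for all n. Then {x_n} is a Cauchy sequence in X. -/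
open Metric

/-- In a metric space, if `F` is a multifunction with nonempty compact
values satisfying the contractive inequality with exponent `r ≥ 1` and `0 < b + c < 1`,
and `{x_n}` is an orbit with `x_{n+1} ∈ F x_n`, `d(x_n, x_{n+1}) = d(x_n, F x_n) > 0`,
then `{x_n}` is a Cauchy sequence. -/
theorem stmt_10 {X : Type*} [MetricSpace X]
    (F : X → Set X) (hne : ∀ x, (F x).Nonempty) (hcomp : ∀ x, IsCompact (F x))
    (r : ℕ) (hr : 1 ≤ r) (a b c : ℝ) (hbc0 : 0 < b + c) (hbc1 : b + c < 1)
    (h : ∀ x y : X,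
      min (hausdorffDist (F x) (F y) ^ r)
        (min (infDist x (F x) * infDist y (F y) ^ (r - 1)) (infDist y (F y) ^ r))
      + a * min (infDist x (F y)) (infDist y (F x))
      ≤ (b * infDist x (F x) + c * dist x y) * infDist y (F y) ^ (r - 1))
    (x : ℕ → X) (hx : ∀ n, x (n + 1) ∈ F (x n))
    (hdx : ∀ n, dist (x n) (x (n + 1)) = infDist (x n) (F (x n)))
    (hpos : ∀ n, 0 < infDist (x n) (F (x n))) :
    CauchySeq x := by
  have key : ∀ n, infDist (x (n+1)) (F (x (n+1))) ≤ (b + c) * infDist (x n) (F (x n)) := by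
    intro n
    have h1 := h (x n) (x (n+1))
    have hz : infDist (x (n+1)) (F (x n)) = 0 := infDist_zero_of_mem (hx n)
    have hH : infDist (x (n+1)) (F (x (n+1))) ≤ hausdorffDist (F (x n)) (F (x (n+1))) :=
      infDist_le_hausdorffDist_of_mem (hx n)
        (hausdorffEDist_ne_top_of_nonempty_of_bounded (hne _) (hne _)
          (hcomp _).isBounded (hcomp _).isBounded)
    rw [hz, min_eq_right infDist_nonneg, mul_zero, add_zero, hdx n] at h1
    have hp := hpos n
    have hq := hpos (n+1)
    generalize infDist (x n) (F (x n)) = p at *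
    generalize infDist (x (n+1)) (F (x (n+1))) = q at *
    generalize hausdorffDist (F (x n)) (F (x (n+1))) = H at *
    obtain ⟨s, rfl⟩ : ∃ s, r = s + 1 := ⟨r - 1, by omega⟩
    rw [Nat.add_sub_cancel] at h1
    have hHr : q ^ (s+1) ≤ H ^ (s+1) := pow_le_pow_left₀ hq.le hH _
    have hqs : 0 < q ^ s := pow_pos hq s
    have hpp : (b * p + c * p) * q ^ s < p * q ^ s :=
      mul_lt_mul_of_pos_right (by nlinarith) hqs
    have h2 : q ^ (s+1) ≤ (b * p + c * p) * q ^ s := by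
      rcases min_le_iff.1 h1 with h3 | h3
      · exact hHr.trans h3
      · rcases min_le_iff.1 h3 with h4 | h4
        · exact absurd h4 (not_le.2 hpp)
        · exact h4
    rw [pow_succ, mul_comm (q ^ s)] at h2
    have := le_of_mul_le_mul_right h2 hqs
    linarith
  refine cauchySeq_of_le_geometric (b + c) (infDist (x 0) (F (x 0))) hbc1 fun n => ?_
  rw [hdx n]
  induction n with
  | zero => simp
  | succ n ih =>
    calc _ ≤ (b + c) * infDist (x n) (F (x n)) := key n
      _ ≤ (b + c) * (infDist (x 0) (F (x 0)) * (b + c) ^ n) := by gcongr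
      _ = _ := by ring
end
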